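/- Let γ > 1, R > 0, T∞ > 0, m > 0 and u∞ < 0 with m u∞² > γRT∞ + 1 (the nondegenerate Bohm criterion). Then there exists a constant c > 0 such that for all real φ, ψ₁, ζ: (RT∞|u∞|/2)φ² − RT∞ φψ₁ + ((m u∞² − 1)/(2|u∞|))ψ₁² − Rψ₁ζ + (R|u∞|/(2(γ−1)T∞))ζ² ≥ c(φ² + ψ₁² + ζ²). -/

import Mathlib

/-!
Completing the squares in `φ` and `ζ` leaves `ψ₁²` with the Schur complement
`(m u∞² − 1 − γRT∞) / (2|u∞|)` as its coefficient, and the Bohm criterion says exactly that this is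
positive. A weighted sum of squares in the sheared variables controls the original ones because
`x² ≤ 2 (x − p y)² + 2 (p y)²`.
-/

theorem sum_sq_add_sq_le_shear {ι A : Type*} [Fintype ι] [CommRing A] [LinearOrder A]
    [IsStrictOrderedRing A] (p x : ι → A) (y : A) :
    ∑ i, x i ^ 2 + y ^ 2 ≤
      2 * ∑ i, (x i - p i * y) ^ 2 + (1 + 2 * ∑ i, p i ^ 2) * y ^ 2 := by
  have sq_le (i : ι) : x i ^ 2 ≤ 2 * (x i - p i * y) ^ 2 + 2 * p i ^ 2 * y ^ 2 := by
    simpa [mul_add, mul_pow, mul_assoc] using add_sq_le (a := x i - p i * y) (b := p i * y)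
  have sum_le := Finset.sum_le_sum fun i (_ : i ∈ Finset.univ) => sq_le i
  simp only [Finset.sum_add_distrib, ← Finset.sum_mul, ← Finset.mul_sum] at sum_le
  linarith

section ArrowForm

variable {ι K : Type*} [Fintype ι] [Field K] {a b : ι → K} {d : K}

theorem sum_mul_sq_sub_add_mul_sq_eq_schur (ha : ∀ i, a i ≠ 0) (x : ι → K) (y : K) :
    ∑ i, a i * x i ^ 2 - 2 * (∑ i, b i * x i) * y + d * y ^ 2 =
      ∑ i, a i * (x i - b i / a i * y) ^ 2 + (d - ∑ i, b i ^ 2 / a i) * y ^ 2 := by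
  have complete_square (i : ι) : a i * (x i - b i / a i * y) ^ 2 =
      a i * x i ^ 2 - 2 * (b i * x i) * y + b i ^ 2 / a i * y ^ 2 := by
    field [ha i]
  simp only [complete_square, Finset.sum_add_distrib, Finset.sum_sub_distrib, ← Finset.sum_mul,
    ← Finset.mul_sum]
  ring

variable [LinearOrder K] [IsStrictOrderedRing K]

theorem exists_pos_mul_sum_sq_add_sq_le_shear (ha : ∀ i, 0 < a i) (hd : 0 < d) (p : ι → K) :
    ∃ c > 0, ∀ (x : ι → K) (y : K),
      c * (∑ i, x i ^ 2 + y ^ 2) ≤ ∑ i, a i * (x i - p i * y) ^ 2 + d * y ^ 2 := by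
  have hN : 0 < 1 + 2 * ∑ i, p i ^ 2 := by positivity
  obtain ⟨e, he, hea⟩ := Pi.exists_forall_pos_add_lt (x := fun _ => 0) ha
  obtain ⟨c, hc, hce, hcd⟩ : ∃ c > 0, c ≤ e / 2 ∧ c ≤ d / (1 + 2 * ∑ i, p i ^ 2) :=
    ⟨min _ _, by positivity, min_le_left _ _, min_le_right _ _⟩
  have hca (i : ι) : c * 2 ≤ a i := by linarith [hea i]
  rw [le_div_iff₀ hN] at hcd
  refine ⟨c, hc, fun x y => ?_⟩
  calc c * (∑ i, x i ^ 2 + y ^ 2)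
      ≤ c * (2 * ∑ i, (x i - p i * y) ^ 2 + (1 + 2 * ∑ i, p i ^ 2) * y ^ 2) :=
        mul_le_mul_of_nonneg_left (sum_sq_add_sq_le_shear p x y) hc.le
    _ = ∑ i, c * 2 * (x i - p i * y) ^ 2 + c * (1 + 2 * ∑ i, p i ^ 2) * y ^ 2 := by
        rw [← Finset.mul_sum]
        ring
    _ ≤ ∑ i, a i * (x i - p i * y) ^ 2 + d * y ^ 2 := by
        gcongr with i
        exact hca i

theorem exists_pos_mul_sum_sq_add_sq_le_of_schur_pos (ha : ∀ i, 0 < a i)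
    (hschur : ∑ i, b i ^ 2 / a i < d) :
    ∃ c > 0, ∀ (x : ι → K) (y : K), c * (∑ i, x i ^ 2 + y ^ 2) ≤
      ∑ i, a i * x i ^ 2 - 2 * (∑ i, b i * x i) * y + d * y ^ 2 := by
  obtain ⟨c, hc, hle⟩ :=
    exists_pos_mul_sum_sq_add_sq_le_shear ha (sub_pos.mpr hschur) fun i => b i / a i
  refine ⟨c, hc, fun x y => ?_⟩
  rw [sum_mul_sq_sub_add_mul_sq_eq_schur fun i => (ha i).ne']
  exact hle x y

end ArrowForm

/-- Under the nondegenerate Bohm criterion `m u∞² > γRT∞ + 1` (with `|u∞| = −u∞`),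
the quadratic form arising in the weighted energy estimate of the term `I₁` is
positive definite: there is `c > 0` with
`(RT∞|u∞|/2)φ² − RT∞φψ₁ + ((mu∞²−1)/(2|u∞|))ψ₁² − Rψ₁ζ + (R|u∞|/(2(γ−1)T∞))ζ²
  ≥ c(φ² + ψ₁² + ζ²)`. -/
theorem nondegenerate_quadratic_positive
    (γ R Tinf m uinf : ℝ) (hγ : 1 < γ) (hR : 0 < R) (hT : 0 < Tinf) (hm : 0 < m)
    (hu : uinf < 0) (hBohm : γ * R * Tinf + 1 < m * uinf ^ 2) :
    ∃ c > 0, ∀ φ ψ₁ ζ : ℝ,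
      c * (φ ^ 2 + ψ₁ ^ 2 + ζ ^ 2) ≤
        (R * Tinf * (-uinf) / 2) * φ ^ 2 - R * Tinf * φ * ψ₁
          + ((m * uinf ^ 2 - 1) / (2 * (-uinf))) * ψ₁ ^ 2 - R * ψ₁ * ζ
          + (R * (-uinf) / (2 * (γ - 1) * Tinf)) * ζ ^ 2 := by
  have hv : 0 < -uinf := neg_pos.mpr hu
  have : 0 < γ - 1 := sub_pos.mpr hγ
  let a : Fin 2 → ℝ := ![R * Tinf * (-uinf) / 2, R * (-uinf) / (2 * (γ - 1) * Tinf)]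
  let b : Fin 2 → ℝ := ![R * Tinf / 2, R / 2]
  have ha : ∀ i, 0 < a i := Fin.forall_fin_two.mpr
    ⟨show 0 < R * Tinf * (-uinf) / 2 by positivity,
      show 0 < R * (-uinf) / (2 * (γ - 1) * Tinf) by positivity⟩
  have sum_eq : ∑ i, b i ^ 2 / a i = γ * R * Tinf / (2 * (-uinf)) := by
    simp only [a, b, Fin.sum_univ_two, Matrix.cons_val_zero, Matrix.cons_val_one]
    field
  have hschur : ∑ i, b i ^ 2 / a i < (m * uinf ^ 2 - 1) / (2 * (-uinf)) := by
    rw [sum_eq]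
    gcongr
    linarith
  obtain ⟨c, hc, hle⟩ := exists_pos_mul_sum_sq_add_sq_le_of_schur_pos ha hschur
  refine ⟨c, hc, fun φ ψ₁ ζ => ?_⟩
  have hle_at := hle ![φ, ζ] ψ₁
  simp only [a, b, Fin.sum_univ_two, Matrix.cons_val_zero, Matrix.cons_val_one] at hle_at
  linarith
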